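/- For every truth assignment J to the variables of encf(F*) that obeys transitivity, there is an interpretation I* of the variables in F* such that I*[F*] = J[encf(F*)]. -/

import Mathlib

mutual
inductive EufTerm (Fn Pr : Type) : Type
  | app : Fn → List (EufTerm Fn Pr) → EufTerm Fn Pr
  | ite : EufFormula Fn Pr → EufTerm Fn Pr → EufTerm Fn Pr → EufTerm Fn Pr
inductive EufFormula (Fn Pr : Type) : Type
  | tt : EufFormula Fn Pr
  | ff : EufFormula Fn Pr
  | not : EufFormula Fn Pr → EufFormula Fn Pr
  | and : EufFormula Fn Pr → EufFormula Fn Pr → EufFormula Fn Pr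
  | or : EufFormula Fn Pr → EufFormula Fn Pr → EufFormula Fn Pr
  | eq : EufTerm Fn Pr → EufTerm Fn Pr → EufFormula Fn Pr
  | papp : Pr → List (EufTerm Fn Pr) → EufFormula Fn Pr
end

structure Interp (Fn Pr : Type) (D : Type u) where
  fn : Fn → List D → D
  pr : Pr → List D → Bool

open Classical in
mutual
noncomputable def evalT {Fn Pr : Type} {D : Type} (I : Interp Fn Pr D) : EufTerm Fn Pr → D
  | .app f args => I.fn f (args.attach.map (fun t => evalT I t.1))
  | .ite G T1 T2 => if evalF I G then evalT I T1 else evalT I T2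
termination_by t => sizeOf t
decreasing_by
  all_goals simp_wf
  all_goals try omega
  all_goals (have := List.sizeOf_lt_of_mem t.2; omega)
noncomputable def evalF {Fn Pr : Type} {D : Type} (I : Interp Fn Pr D) : EufFormula Fn Pr → Bool
  | .tt => true
  | .ff => false
  | .not G => !evalF I G
  | .and G1 G2 => evalF I G1 && evalF I G2
  | .or G1 G2 => evalF I G1 || evalF I G2
  | .eq T1 T2 => decide (evalT I T1 = evalT I T2)
  | .papp p args => I.pr p (args.attach.map (fun t => evalT I t.1))
termination_by g => sizeOf g
decreasing_by
  all_goals simp_wf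
  all_goals try omega
  all_goals (have := List.sizeOf_lt_of_mem t.2; omega)
end
def ValidOn {Fn Pr : Type} (F : EufFormula Fn Pr) (D : Type) : Prop :=
  ∀ I : Interp Fn Pr D, evalF I F = true

def UniversallyValid {Fn Pr : Type} (F : EufFormula Fn Pr) : Prop :=
  ∀ D : Type, Nonempty D → ValidOn F D

/-- Expressions: terms or formulas. -/
inductive EufExpr (Fn Pr : Type) : Type
  | t : EufTerm Fn Pr → EufExpr Fn Pr
  | f : EufFormula Fn Pr → EufExpr Fn Pr

/-- Immediate (proper) subexpression relation. -/
inductive ImmSub {Fn Pr : Type} : EufExpr Fn Pr → EufExpr Fn Pr → Prop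
  | appArg {g : Fn} {args : List (EufTerm Fn Pr)} {T : EufTerm Fn Pr} :
      T ∈ args → ImmSub (.t T) (.t (.app g args))
  | iteC {G : EufFormula Fn Pr} {T1 T2 : EufTerm Fn Pr} : ImmSub (.f G) (.t (.ite G T1 T2))
  | ite1 {G : EufFormula Fn Pr} {T1 T2 : EufTerm Fn Pr} : ImmSub (.t T1) (.t (.ite G T1 T2))
  | ite2 {G : EufFormula Fn Pr} {T1 T2 : EufTerm Fn Pr} : ImmSub (.t T2) (.t (.ite G T1 T2))
  | not {G : EufFormula Fn Pr} : ImmSub (.f G) (.f (.not G))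
  | andL {G1 G2 : EufFormula Fn Pr} : ImmSub (.f G1) (.f (.and G1 G2))
  | andR {G1 G2 : EufFormula Fn Pr} : ImmSub (.f G2) (.f (.and G1 G2))
  | orL {G1 G2 : EufFormula Fn Pr} : ImmSub (.f G1) (.f (.or G1 G2))
  | orR {G1 G2 : EufFormula Fn Pr} : ImmSub (.f G2) (.f (.or G1 G2))
  | eqL {T1 T2 : EufTerm Fn Pr} : ImmSub (.t T1) (.f (.eq T1 T2))
  | eqR {T1 T2 : EufTerm Fn Pr} : ImmSub (.t T2) (.f (.eq T1 T2))
  | pappArg {p : Pr} {args : List (EufTerm Fn Pr)} {T : EufTerm Fn Pr} :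
      T ∈ args → ImmSub (.t T) (.f (.papp p args))

/-- `SubExpr a b`: `a` occurs (as a subexpression) in `b`. -/
def SubExpr {Fn Pr : Type} (a b : EufExpr Fn Pr) : Prop := Relation.ReflTransGen ImmSub a b

def TermInT {Fn Pr : Type} (T S : EufTerm Fn Pr) : Prop := SubExpr (.t T) (.t S)
def TermInF {Fn Pr : Type} (T : EufTerm Fn Pr) (F : EufFormula Fn Pr) : Prop :=
  SubExpr (.t T) (.f F)
def FormulaInT {Fn Pr : Type} (G : EufFormula Fn Pr) (S : EufTerm Fn Pr) : Prop :=
  SubExpr (.f G) (.t S)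
def FormulaInF {Fn Pr : Type} (G F : EufFormula Fn Pr) : Prop := SubExpr (.f G) (.f F)

def IsAppTerm {Fn Pr : Type} : EufTerm Fn Pr → Prop
  | .app _ _ => True
  | _ => False

/-- `𝒯(F)`: the function application terms occurring in `F`. -/
def AppTermsF {Fn Pr : Type} (F : EufFormula Fn Pr) : Set (EufTerm Fn Pr) :=
  {T | IsAppTerm T ∧ TermInF T F}

/-- A function symbol occurs in `F` when some application of it occurs in `F`. -/
def FnInF {Fn Pr : Type} (g : Fn) (F : EufFormula Fn Pr) : Prop :=
  ∃ args, TermInF (EufTerm.app g args) F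

def PrInF {Fn Pr : Type} (p : Pr) (F : EufFormula Fn Pr) : Prop :=
  ∃ args, FormulaInF (EufFormula.papp p args) F

/-- `I` is diverse for `F` with respect to the set `Sg` of function symbols. -/
def DiverseFor {Fn Pr D : Type} (I : Interp Fn Pr D) (F : EufFormula Fn Pr)
    (Sg : Set Fn) : Prop :=
  ∀ (g : Fn) (args : List (EufTerm Fn Pr)), g ∈ Sg →
    TermInF (EufTerm.app g args) F →
    ∀ T2 ∈ AppTermsF F, evalT I (EufTerm.app g args) = evalT I T2 →
      ∃ args2, T2 = EufTerm.app g args2 ∧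
        List.Forall₂ (fun a b => evalT I a = evalT I b) args args2

mutual
/-- PEUF g-terms, where `isP` designates the p-function symbols. -/
inductive IsGTerm {Fn Pr : Type} (isP : Fn → Prop) : EufTerm Fn Pr → Prop
  | ite {G : EufFormula Fn Pr} {T1 T2 : EufTerm Fn Pr} :
      IsGFormula isP G → IsGTerm isP T1 → IsGTerm isP T2 → IsGTerm isP (.ite G T1 T2)
  | app {g : Fn} {args : List (EufTerm Fn Pr)} :
      ¬ isP g → (∀ T ∈ args, IsPTerm isP T) → IsGTerm isP (.app g args)
/-- PEUF p-terms. -/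
inductive IsPTerm {Fn Pr : Type} (isP : Fn → Prop) : EufTerm Fn Pr → Prop
  | g {T : EufTerm Fn Pr} : IsGTerm isP T → IsPTerm isP T
  | ite {G : EufFormula Fn Pr} {T1 T2 : EufTerm Fn Pr} :
      IsGFormula isP G → IsPTerm isP T1 → IsPTerm isP T2 → IsPTerm isP (.ite G T1 T2)
  | app {g : Fn} {args : List (EufTerm Fn Pr)} :
      isP g → (∀ T ∈ args, IsPTerm isP T) → IsPTerm isP (.app g args)
/-- PEUF g-formulas. -/
inductive IsGFormula {Fn Pr : Type} (isP : Fn → Prop) : EufFormula Fn Pr → Prop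
  | tt : IsGFormula isP .tt
  | ff : IsGFormula isP .ff
  | not {G : EufFormula Fn Pr} : IsGFormula isP G → IsGFormula isP (.not G)
  | and {G1 G2 : EufFormula Fn Pr} :
      IsGFormula isP G1 → IsGFormula isP G2 → IsGFormula isP (.and G1 G2)
  | or {G1 G2 : EufFormula Fn Pr} :
      IsGFormula isP G1 → IsGFormula isP G2 → IsGFormula isP (.or G1 G2)
  | eq {T1 T2 : EufTerm Fn Pr} :
      IsGTerm isP T1 → IsGTerm isP T2 → IsGFormula isP (.eq T1 T2)
  | papp {p : Pr} {args : List (EufTerm Fn Pr)} :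
      (∀ T ∈ args, IsPTerm isP T) → IsGFormula isP (.papp p args)
/-- PEUF p-formulas. -/
inductive IsPFormula {Fn Pr : Type} (isP : Fn → Prop) : EufFormula Fn Pr → Prop
  | g {G : EufFormula Fn Pr} : IsGFormula isP G → IsPFormula isP G
  | and {G1 G2 : EufFormula Fn Pr} :
      IsPFormula isP G1 → IsPFormula isP G2 → IsPFormula isP (.and G1 G2)
  | or {G1 G2 : EufFormula Fn Pr} :
      IsPFormula isP G1 → IsPFormula isP G2 → IsPFormula isP (.or G1 G2)
  | eq {T1 T2 : EufTerm Fn Pr} :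
      IsPTerm isP T1 → IsPTerm isP T2 → IsPFormula isP (.eq T1 T2)
end

/-- The p-function symbols occurring in `F`. -/
def PSymbolsIn {Fn Pr : Type} (isP : Fn → Prop) (F : EufFormula Fn Pr) : Set Fn :=
  {g | isP g ∧ FnInF g F}

/-- `I` is maximally diverse for the p-formula `F`. -/
def MaxDiverse {Fn Pr D : Type} (isP : Fn → Prop) (I : Interp Fn Pr D)
    (F : EufFormula Fn Pr) : Prop :=
  DiverseFor I F (PSymbolsIn isP F)

/-- `I'` refines `I` on the term set `Ts`. -/
def RefinesOn {Fn Pr D D' : Type} (I' : Interp Fn Pr D') (I : Interp Fn Pr D)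
    (Ts : Set (EufTerm Fn Pr)) : Prop :=
  ∀ T1 ∈ Ts, ∀ T2 ∈ Ts, evalT I' T1 = evalT I' T2 → evalT I T1 = evalT I T2

def ProperRefinesOn {Fn Pr D D' : Type} (I' : Interp Fn Pr D') (I : Interp Fn Pr D)
    (Ts : Set (EufTerm Fn Pr)) : Prop :=
  RefinesOn I' I Ts ∧
    ∃ T1 ∈ Ts, ∃ T2 ∈ Ts, evalT I T1 = evalT I T2 ∧ evalT I' T1 ≠ evalT I' T2
/-- Propositional formulas over a variable type `V`. -/
inductive PropForm (V : Type) : Type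
  | tt : PropForm V
  | ff : PropForm V
  | var : V → PropForm V
  | not : PropForm V → PropForm V
  | and : PropForm V → PropForm V → PropForm V
  | or : PropForm V → PropForm V → PropForm V

/-- Evaluation of a propositional formula under a truth assignment. -/
def PropForm.evalP {V : Type} (J : V → Bool) : PropForm V → Bool
  | .tt => true
  | .ff => false
  | .var v => J v
  | .not φ => !φ.evalP J
  | .and φ ψ => φ.evalP J && ψ.evalP J
  | .or φ ψ => φ.evalP J || ψ.evalP J

/-- Variables of the propositional encoding: the propositional variables of `F*`
together with the equality variables `e_{i,j}`. -/
abbrev EncVar (Pr : Type) : Type := Pr ⊕ ℕ × ℕ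

/-- `e_{[i,j]}`. -/
def evarF {Pr : Type} (i j : ℕ) : PropForm (EncVar Pr) :=
  if i = j then .tt else if i < j then .var (.inr (i, j)) else .var (.inr (j, i))

def bigOr {V : Type} (l : List (PropForm V)) : PropForm V := l.foldr .or .ff

open Classical in
mutual
/-- `enct_i(T)`: the conditions under which term `T` selects the domain variable `v i`. -/
noncomputable def enct {Fn Pr : Type} (v : ℕ → Fn) (N M : ℕ) (i : ℕ) :
    EufTerm Fn Pr → PropForm (EncVar Pr)
  | .app g _ => if g = v i then .tt else .ff
  | .ite G T1 T2 =>
      .or (.and (encf v N M G) (enct v N M i T1))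
          (.and (.not (encf v N M G)) (enct v N M i T2))
/-- `encf(G)`: the propositional encoding of the formula `G`. -/
noncomputable def encf {Fn Pr : Type} (v : ℕ → Fn) (N M : ℕ) :
    EufFormula Fn Pr → PropForm (EncVar Pr)
  | .tt => .tt
  | .ff => .ff
  | .not G => .not (encf v N M G)
  | .and G1 G2 => .and (encf v N M G1) (encf v N M G2)
  | .or G1 G2 => .or (encf v N M G1) (encf v N M G2)
  | .papp p _ => .var (.inl p)
  | .eq T1 T2 =>
      .or
        (bigOr ((List.range' 1 N).flatMap (fun i =>
          (List.range' 1 N).map (fun j =>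
            PropForm.and (enct v N M i T1) (.and (evarF i j) (enct v N M j T2))))))
        (bigOr ((List.range' (N+1) M).map (fun i =>
          PropForm.and (enct v N M i T1) (enct v N M i T2))))
end

/-- A truth assignment obeys transitivity on the equality variables `e_{i,j}`, `1 ≤ i,j ≤ N`. -/
def ObeysTrans {Pr : Type} (J : EncVar Pr → Bool) (N : ℕ) : Prop :=
  ∀ i j k, 1 ≤ i → i ≤ N → 1 ≤ j → j ≤ N → 1 ≤ k → k ≤ N →
    (evarF (Pr := Pr) i j).evalP J = true → (evarF (Pr := Pr) j k).evalP J = true →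
    (evarF (Pr := Pr) i k).evalP J = true

open Classical in
/-- `sel_{I}(T)`: the index of the domain variable selected by the ITE controls of `T`. -/
noncomputable def selT {Fn Pr D : Type} (v : ℕ → Fn) (NM : ℕ) (I : Interp Fn Pr D) :
    EufTerm Fn Pr → ℕ
  | .app g _ => sInf {i | 1 ≤ i ∧ i ≤ NM ∧ g = v i}
  | .ite G T1 T2 => if evalF I G = true then selT v NM I T1 else selT v NM I T2

/-- `F` contains only domain variables (among `v 1, …, v NM`) and propositional variables. -/
def VarsOnlyEnum {Fn Pr : Type} (v : ℕ → Fn) (NM : ℕ) (F : EufFormula Fn Pr) : Prop :=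
  (∀ (g : Fn) (args : List (EufTerm Fn Pr)), TermInF (EufTerm.app g args) F →
      args = [] ∧ ∃ i, 1 ≤ i ∧ i ≤ NM ∧ g = v i) ∧
  (∀ (p : Pr) (args : List (EufTerm Fn Pr)), FormulaInF (EufFormula.papp p args) F →
      args = [])

theorem bigOr_eval {V : Type} (J : V → Bool) (l : List (PropForm V)) :
    (bigOr l).evalP J = true ↔ ∃ φ ∈ l, φ.evalP J = true := by
  induction l with
  | nil => simp [bigOr, PropForm.evalP]
  | cons a l ih =>
    have : bigOr (a :: l) = .or a (bigOr l) := rfl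
    rw [this]
    simp [PropForm.evalP, ih]

theorem evarF_symm {Pr : Type} (i j : ℕ) : evarF (Pr := Pr) i j = evarF j i := by
  unfold evarF
  rcases lt_trichotomy i j with h | h | h
  · rw [if_neg h.ne, if_pos h, if_neg h.ne', if_neg (by omega)]
  · subst h; rfl
  · rw [if_neg h.ne', if_neg (by omega), if_neg h.ne, if_pos h]

/-- The equivalence of indices induced by `J`. -/
def idxRel {Pr : Type} (J : EncVar Pr → Bool) (N : ℕ) (i j : ℕ) : Prop :=
  i = j ∨ (1 ≤ i ∧ i ≤ N ∧ 1 ≤ j ∧ j ≤ N ∧ (evarF (Pr := Pr) i j).evalP J = true)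

theorem idxRel_equiv {Pr : Type} (J : EncVar Pr → Bool) (N : ℕ) (h : ObeysTrans J N) :
    Equivalence (idxRel J N) where
  refl i := Or.inl rfl
  symm := by
    rintro i j (rfl | ⟨a, b, c, d, e⟩)
    · exact Or.inl rfl
    · exact Or.inr ⟨c, d, a, b, by rw [evarF_symm]; exact e⟩
  trans := by
    rintro i j k (rfl | ⟨a, b, c, d, e⟩) h2
    · exact h2
    · rcases h2 with rfl | ⟨a', b', c', d', e'⟩
      · exact Or.inr ⟨a, b, c, d, e⟩
      · exact Or.inr ⟨a, b, c', d', h i j k a b c d c' d' e e'⟩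

mutual
theorem auxT {Fn Pr D : Type} (v : ℕ → Fn) (N M : ℕ)
    (Fstar : EufFormula Fn Pr) (hvars : VarsOnlyEnum v (N + M) Fstar)
    (hinj : ∀ i j, 1 ≤ i → i ≤ N + M → 1 ≤ j → j ≤ N + M → v i = v j → i = j)
    (J : EncVar Pr → Bool) (I : Interp Fn Pr D) (c : ℕ → D)
    (hc : ∀ i j, c i = c j ↔ idxRel J N i j)
    (hfn : ∀ i, 1 ≤ i → i ≤ N + M → ∀ l, I.fn (v i) l = c i)
    (hpr : ∀ p l, I.pr p l = J (.inl p)) (T : EufTerm Fn Pr)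
    (hT : SubExpr (.t T) (.f Fstar)) :
    ∃ i, 1 ≤ i ∧ i ≤ N + M ∧ evalT I T = c i ∧
      ∀ k, 1 ≤ k → k ≤ N + M → ((enct v N M k T).evalP J = true ↔ k = i) := by
  match T, hT with
  | .app g args, hT =>
    obtain ⟨-, i, h1, h2, rfl⟩ := hvars.1 g args hT
    refine ⟨i, h1, h2, ?_, ?_⟩
    · rw [evalT]; exact hfn i h1 h2 _
    · intro k k1 k2
      rw [enct]
      by_cases h : v i = v k
      · rw [if_pos h]
        simp [PropForm.evalP, hinj i k h1 h2 k1 k2 h]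
      · rw [if_neg h]
        simp only [PropForm.evalP, Bool.false_eq_true, false_iff]
        rintro rfl; exact h rfl
  | .ite G T1 T2, hT =>
    have hG := auxF v N M Fstar hvars hinj J I c hc hfn hpr G (.head .iteC hT)
    obtain ⟨i, a1, a2, a3, a4⟩ :=
      auxT v N M Fstar hvars hinj J I c hc hfn hpr T1 (.head .ite1 hT)
    obtain ⟨j, b1, b2, b3, b4⟩ :=
      auxT v N M Fstar hvars hinj J I c hc hfn hpr T2 (.head .ite2 hT)
    cases hb : evalF I G with
    | true =>
      refine ⟨i, a1, a2, by rw [evalT]; simp [hb, a3], ?_⟩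
      intro k k1 k2
      rw [enct]
      simp [PropForm.evalP, ← hG, hb, a4 k k1 k2]
    | false =>
      refine ⟨j, b1, b2, by rw [evalT]; simp [hb, b3], ?_⟩
      intro k k1 k2
      rw [enct]
      simp [PropForm.evalP, ← hG, hb, b4 k k1 k2]
termination_by sizeOf T
theorem auxF {Fn Pr D : Type} (v : ℕ → Fn) (N M : ℕ)
    (Fstar : EufFormula Fn Pr) (hvars : VarsOnlyEnum v (N + M) Fstar)
    (hinj : ∀ i j, 1 ≤ i → i ≤ N + M → 1 ≤ j → j ≤ N + M → v i = v j → i = j)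
    (J : EncVar Pr → Bool) (I : Interp Fn Pr D) (c : ℕ → D)
    (hc : ∀ i j, c i = c j ↔ idxRel J N i j)
    (hfn : ∀ i, 1 ≤ i → i ≤ N + M → ∀ l, I.fn (v i) l = c i)
    (hpr : ∀ p l, I.pr p l = J (.inl p)) (G : EufFormula Fn Pr)
    (hG : SubExpr (.f G) (.f Fstar)) :
    evalF I G = (encf v N M G).evalP J := by
  match G, hG with
  | .tt, _ => rw [evalF, encf]; rfl
  | .ff, _ => rw [evalF, encf]; rfl
  | .not G, hG =>
    rw [evalF, encf, PropForm.evalP,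
      auxF v N M Fstar hvars hinj J I c hc hfn hpr G (.head .not hG)]
  | .and G1 G2, hG =>
    rw [evalF, encf, PropForm.evalP,
      auxF v N M Fstar hvars hinj J I c hc hfn hpr G1 (.head .andL hG),
      auxF v N M Fstar hvars hinj J I c hc hfn hpr G2 (.head .andR hG)]
  | .or G1 G2, hG =>
    rw [evalF, encf, PropForm.evalP,
      auxF v N M Fstar hvars hinj J I c hc hfn hpr G1 (.head .orL hG),
      auxF v N M Fstar hvars hinj J I c hc hfn hpr G2 (.head .orR hG)]
  | .papp p args, hG => rw [evalF, encf, hpr]; rfl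
  | .eq T1 T2, hG =>
    obtain ⟨i, a1, a2, a3, a4⟩ :=
      auxT v N M Fstar hvars hinj J I c hc hfn hpr T1 (.head .eqL hG)
    obtain ⟨j, b1, b2, b3, b4⟩ :=
      auxT v N M Fstar hvars hinj J I c hc hfn hpr T2 (.head .eqR hG)
    classical
    rw [Bool.eq_iff_iff, evalF, encf, decide_eq_true_iff, a3, b3, hc, PropForm.evalP,
      Bool.or_eq_true, bigOr_eval, bigOr_eval]
    constructor
    · intro h
      by_cases hN : i ≤ N ∧ j ≤ N
      · left
        have he : (evarF (Pr := Pr) i j).evalP J = true := by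
          rcases h with rfl | h
          · simp [evarF, PropForm.evalP]
          · exact h.2.2.2.2
        refine ⟨_, List.mem_flatMap.2 ⟨i, ?_, List.mem_map.2 ⟨j, ?_, rfl⟩⟩, ?_⟩
        · rw [List.mem_range'_1]; omega
        · rw [List.mem_range'_1]; omega
        · simp [PropForm.evalP, he, (a4 i a1 a2).2 rfl, (b4 j b1 b2).2 rfl]
      · right
        have hij : i = j := by
          rcases h with h | h
          · exact h
          · exact absurd ⟨h.2.1, h.2.2.2.1⟩ hN
        subst hij
        refine ⟨_, List.mem_map.2 ⟨i, ?_, rfl⟩, ?_⟩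
        · rw [List.mem_range'_1]; omega
        · simp [PropForm.evalP, (a4 i a1 a2).2 rfl, (b4 i b1 b2).2 rfl]
    · rintro (⟨φ, hm, hφ⟩ | ⟨φ, hm, hφ⟩)
      · obtain ⟨k, hk, hm⟩ := List.mem_flatMap.1 hm
        obtain ⟨l, hl, rfl⟩ := List.mem_map.1 hm
        rw [List.mem_range'_1] at hk hl
        simp only [PropForm.evalP, Bool.and_eq_true] at hφ
        obtain ⟨p1, p2, p3⟩ := hφ
        have e1 := (a4 k (by omega) (by omega)).1 p1
        have e2 := (b4 l (by omega) (by omega)).1 p3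
        subst e1 e2
        exact Or.inr ⟨a1, by omega, b1, by omega, p2⟩
      · obtain ⟨k, hk, rfl⟩ := List.mem_map.1 hm
        rw [List.mem_range'_1] at hk
        simp only [PropForm.evalP, Bool.and_eq_true] at hφ
        have e1 := (a4 k (by omega) (by omega)).1 hφ.1
        have e2 := (b4 k (by omega) (by omega)).1 hφ.2
        exact Or.inl (e1.symm.trans e2)
termination_by sizeOf G
end

/-- For every truth assignment `J` obeying transitivity there is an
interpretation `I*` of the variables of `F*` with `I*[F*] = J[encf(F*)]`. -/
theorem eF_F_lemma {Fn Pr : Type} (v : ℕ → Fn) (N M : ℕ)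
    (Fstar : EufFormula Fn Pr) (hvars : VarsOnlyEnum v (N + M) Fstar)
    (hinj : ∀ i j, 1 ≤ i → i ≤ N + M → 1 ≤ j → j ≤ N + M → v i = v j → i = j)
    (J : EncVar Pr → Bool) (htrans : ObeysTrans J N) :
    ∃ (D : Type) (_ : Nonempty D) (I : Interp Fn Pr D),
      evalF I Fstar = (encf v N M Fstar).evalP J := by
  classical
  let S : Setoid ℕ := ⟨idxRel J N, idxRel_equiv J N htrans⟩
  let I : Interp Fn Pr (Quotient S) :=
    { fn := fun g _ => if h : ∃ i, 1 ≤ i ∧ i ≤ N + M ∧ g = v i then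
        Quotient.mk S h.choose else Quotient.mk S 0
      pr := fun p _ => J (.inl p) }
  refine ⟨Quotient S, ⟨Quotient.mk S 0⟩, I, ?_⟩
  refine auxF v N M Fstar hvars hinj J I (Quotient.mk S) (fun i j => Quotient.eq) ?_
    (fun _ _ => rfl) Fstar Relation.ReflTransGen.refl
  intro i h1 h2 l
  have h : ∃ k, 1 ≤ k ∧ k ≤ N + M ∧ v i = v k := ⟨i, h1, h2, rfl⟩
  have e : h.choose = i :=
    hinj _ _ h.choose_spec.1 h.choose_spec.2.1 h1 h2 h.choose_spec.2.2.symm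
  change (if h : ∃ k, 1 ≤ k ∧ k ≤ N + M ∧ v i = v k then
        Quotient.mk S h.choose else Quotient.mk S 0) = _
  rw [dif_pos h, e]
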